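/- arXiv:cs/0510029 — 2 statements merged into one kernel-verified Lean document; each statement's English description precedes it below -/
import Mathlib

section
/- Every joint probability matrix all of whose entries are strictly positive is a good matrix. -/
open scoped BigOperators Classical

noncomputable section

/-- Probability of an event `E` under a distribution `μ` on a finite sample space `Ω`. -/
def pr {Ω : Type} [Fintype Ω] (μ : Ω → ℝ) (E : Ω → Prop) : ℝ :=
  ∑ ω, if E ω then μ ω else 0

/-- `μ` is a probability distribution on the finite space `Ω`. -/
def IsProb {Ω : Type} [Fintype Ω] (μ : Ω → ℝ) : Prop :=
  (∀ ω, 0 ≤ μ ω) ∧ ∑ ω, μ ω = 1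

/-- Shannon entropy (base 2) of a random variable `α` on a finite probability space. -/
def ent {Ω A : Type} [Fintype Ω] (μ : Ω → ℝ) (α : Ω → A) : ℝ :=
  -∑ a ∈ Finset.univ.image α,
      pr μ (fun ω => α ω = a) * Real.logb 2 (pr μ (fun ω => α ω = a))

/-- Conditional entropy `H(α | β)`. -/
def condEnt {Ω A B : Type} [Fintype Ω] (μ : Ω → ℝ) (α : Ω → A) (β : Ω → B) : ℝ :=
  ent μ (fun ω => (α ω, β ω)) - ent μ β

/-- Mutual information `I(α : β)`. -/
def mutualInfo {Ω A B : Type} [Fintype Ω] (μ : Ω → ℝ) (α : Ω → A) (β : Ω → B) : ℝ :=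
  ent μ α + ent μ β - ent μ (fun ω => (α ω, β ω))

/-- Conditional mutual information `I(α : β | γ)`. -/
def condMutualInfo {Ω A B C : Type} [Fintype Ω] (μ : Ω → ℝ)
    (α : Ω → A) (β : Ω → B) (γ : Ω → C) : ℝ :=
  condEnt μ α γ + condEnt μ β γ - condEnt μ (fun ω => (α ω, β ω)) γ

/-- Independence of two random variables. -/
def Indep {Ω A B : Type} [Fintype Ω] (μ : Ω → ℝ) (α : Ω → A) (β : Ω → B) : Prop :=
  ∀ (a : A) (b : B),
    pr μ (fun ω => α ω = a ∧ β ω = b) =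
      pr μ (fun ω => α ω = a) * pr μ (fun ω => β ω = b)

/-- Auxiliary form of "conditionally independent of order `k`" (explicit `Fintype`):
`α` and `β` are conditionally independent of order `0` if they are independent,
and of order `k + 1` if on some finite probability space there are random variables
`α₀, β₀, α*, β*` such that `(α₀, β₀)` has the same joint distribution as `(α, β)`,
`I(α₀ : β₀ | α*) = 0`, `I(α₀ : β₀ | β*) = 0`, and `α*, β*` are conditionally
independent of order `k`. -/
def CondIndepOrderAux : ℕ → (Ω A B : Type) → Fintype Ω → (Ω → ℝ) → (Ω → A) → (Ω → B) → Prop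
  | 0, _Ω, _A, _B, iΩ, μ, α, β => @Indep _ _ _ iΩ μ α β
  | k+1, _Ω, A, B, iΩ, μ, α, β =>
      ∃ (Ω' A' B' : Type) (iΩ' : Fintype Ω') (μ' : Ω' → ℝ)
        (α₀ : Ω' → A) (β₀ : Ω' → B) (αs : Ω' → A') (βs : Ω' → B'),
        @IsProb _ iΩ' μ' ∧
        (∀ (a : A) (b : B),
          @pr _ iΩ' μ' (fun ω => α₀ ω = a ∧ β₀ ω = b) =
            @pr _ iΩ μ (fun ω => α ω = a ∧ β ω = b)) ∧
        @condMutualInfo _ _ _ _ iΩ' μ' α₀ β₀ αs = 0 ∧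
        @condMutualInfo _ _ _ _ iΩ' μ' α₀ β₀ βs = 0 ∧
        CondIndepOrderAux k Ω' A' B' iΩ' μ' αs βs

/-- Random variables `α` and `β` on a finite probability space are
conditionally independent of order `k`. -/
def CondIndepOrder {Ω A B : Type} [iΩ : Fintype Ω]
    (μ : Ω → ℝ) (α : Ω → A) (β : Ω → B) (k : ℕ) : Prop :=
  CondIndepOrderAux k Ω A B iΩ μ α β

/-- An `m × n` joint probability matrix: nonnegative entries summing to `1`. -/
def IsJointProbMatrix {m n : ℕ} (M : Matrix (Fin m) (Fin n) ℝ) : Prop :=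
  (∀ i j, 0 ≤ M i j) ∧ ∑ i, ∑ j, M i j = 1

/-- `M` is the joint probability matrix of the pair `(α, β)`. -/
def IsJointMatrixOf {Ω : Type} [Fintype Ω] {m n : ℕ} (M : Matrix (Fin m) (Fin n) ℝ)
    (μ : Ω → ℝ) (α : Ω → Fin m) (β : Ω → Fin n) : Prop :=
  ∀ i j, M i j = pr μ (fun ω => α ω = i ∧ β ω = j)

/-- `M` is a block matrix: rows and columns can be partitioned into two nonempty
parts so that the two diagonal blocks each contain a nonzero element and all
entries outside the diagonal blocks vanish. -/
def IsBlockMatrix {m n : ℕ} (M : Matrix (Fin m) (Fin n) ℝ) : Prop :=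
  ∃ (I₁ : Finset (Fin m)) (J₁ : Finset (Fin n)),
    I₁.Nonempty ∧ I₁ᶜ.Nonempty ∧ J₁.Nonempty ∧ J₁ᶜ.Nonempty ∧
    (∃ i ∈ I₁, ∃ j ∈ J₁, M i j ≠ 0) ∧
    (∃ i ∈ I₁ᶜ, ∃ j ∈ J₁ᶜ, M i j ≠ 0) ∧
    (∀ i j, ((i ∈ I₁ ∧ j ∈ J₁ᶜ) ∨ (i ∈ I₁ᶜ ∧ j ∈ J₁)) → M i j = 0)

/-- `M` is a good matrix: the joint probability matrix of some pair of
conditionally independent random variables (of some finite order). -/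
def IsGoodMatrix {m n : ℕ} (M : Matrix (Fin m) (Fin n) ℝ) : Prop :=
  ∃ (Ω : Type) (iΩ : Fintype Ω) (μ : Ω → ℝ) (α : Ω → Fin m) (β : Ω → Fin n) (k : ℕ),
    @IsProb _ iΩ μ ∧ @IsJointMatrixOf _ iΩ _ _ M μ α β ∧
    @CondIndepOrder _ _ _ iΩ μ α β k

/-- A stochastic matrix: nonnegative entries, all row sums equal to `1`. -/
def IsStochastic {m n : ℕ} (A : Matrix (Fin m) (Fin n) ℝ) : Prop :=
  (∀ i j, 0 ≤ A i j) ∧ ∀ i, ∑ j, A i j = 1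

/-- The matrix `D_ε`: diagonal entries `1/2 - ε`, off-diagonal entries `ε`. -/
def Dmat (ε : ℝ) : Matrix (Fin 2) (Fin 2) ℝ :=
  fun i j => if i = j then 1/2 - ε else ε

/-- The distribution of `n` i.i.d. trials, each distributed according to `μ`. -/
def iidMeasure {Ω : Type} [Fintype Ω] (μ : Ω → ℝ) (n : ℕ) : (Fin n → Ω) → ℝ :=
  fun ωv => ∏ i, μ (ωv i)

/-- The sequence of `n` coordinatewise copies of a random variable. -/
def iidRV {Ω A : Type} (α : Ω → A) (n : ℕ) : (Fin n → Ω) → (Fin n → A) :=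
  fun ωv i => α (ωv i)

/-- `(u, v, w)` belongs to the rate region of the pair `(α, β)`. -/
def InRateRegion {Ω A B : Type} [Fintype Ω] (μ : Ω → ℝ) (α : Ω → A) (β : Ω → B)
    (u v w : ℝ) : Prop :=
  0 ≤ u ∧ 0 ≤ v ∧ 0 ≤ w ∧
  ∀ ε > (0:ℝ), ∀ δ > (0:ℝ), ∃ n₀ : ℕ, ∀ n ≥ n₀,
    ∃ (t : (Fin n → A) × (Fin n → B) → (Fin ⌊(u + δ) * n⌋₊ → Bool))
      (f : (Fin n → A) × (Fin n → B) → (Fin ⌊(v + δ) * n⌋₊ → Bool))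
      (g : (Fin n → A) × (Fin n → B) → (Fin ⌊(w + δ) * n⌋₊ → Bool))
      (r : (Fin ⌊(u + δ) * n⌋₊ → Bool) × (Fin ⌊(v + δ) * n⌋₊ → Bool) → (Fin n → A))
      (s : (Fin ⌊(u + δ) * n⌋₊ → Bool) × (Fin ⌊(w + δ) * n⌋₊ → Bool) → (Fin n → B)),
      pr (iidMeasure μ n) (fun ωv =>
          r (t (iidRV α n ωv, iidRV β n ωv), f (iidRV α n ωv, iidRV β n ωv)) = iidRV α n ωv)
        > 1 - ε ∧
      pr (iidMeasure μ n) (fun ωv =>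
          s (t (iidRV α n ωv, iidRV β n ωv), g (iidRV α n ωv, iidRV β n ωv)) = iidRV β n ωv)
        > 1 - ε

/-- The support of a matrix: the set of positions of its nonzero entries. -/
def msupport {m n : ℕ} (M : Matrix (Fin m) (Fin n) ℝ) : Set (Fin m × Fin n) :=
  {p | M p.1 p.2 ≠ 0}

/-- An r-matrix: nonnegative entries and rectangular support. -/
def IsRMatrix {m n : ℕ} (M : Matrix (Fin m) (Fin n) ℝ) : Prop :=
  (∀ i j, 0 ≤ M i j) ∧ ∃ (A : Set (Fin m)) (B : Set (Fin n)), msupport M = A ×ˢ B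

/-- An r-decomposition of `M`: an expression of `M` as a finite sum of r-matrices
such that the supports of consecutive summands intersect. -/
def IsRDecomposition {m n : ℕ} (M : Matrix (Fin m) (Fin n) ℝ)
    (l : ℕ) (Ms : Fin l → Matrix (Fin m) (Fin n) ℝ) : Prop :=
  M = ∑ i, Ms i ∧ (∀ i, IsRMatrix (Ms i)) ∧
  ∀ (i : ℕ) (h : i + 1 < l),
    (msupport (Ms ⟨i, Nat.lt_of_succ_lt h⟩) ∩ msupport (Ms ⟨i + 1, h⟩)).Nonempty

end


/-! ### Entropy facts -/

theorem ci_ent_eq {Ω A : Type} [Fintype Ω] (μ : Ω → ℝ) (α : Ω → A) :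
    ent μ α = -∑ ω, μ ω * Real.logb 2 (pr μ (fun ω' => α ω' = α ω)) := by
  unfold ent
  congr 1
  have h := Finset.sum_fiberwise_of_maps_to (s := Finset.univ) (t := Finset.univ.image α) (g := α)
    (fun ω _ => Finset.mem_image_of_mem α (Finset.mem_univ ω))
    (fun ω => μ ω * Real.logb 2 (pr μ (fun ω' => α ω' = α ω)))
  rw [← h]
  refine Finset.sum_congr rfl fun a _ => ?_
  have h2 : ∑ ω with α ω = a, μ ω * Real.logb 2 (pr μ (fun ω' => α ω' = α ω))
      = ∑ ω with α ω = a, μ ω * Real.logb 2 (pr μ (fun ω' => α ω' = a)) := by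
    refine Finset.sum_congr rfl fun ω hω => ?_
    rw [(Finset.mem_filter.1 hω).2]
  rw [h2, ← Finset.sum_mul]
  congr 1
  unfold pr
  rw [Finset.sum_filter]

theorem ci_pr_pos {Ω : Type} [Fintype Ω] (μ : Ω → ℝ) (h0 : ∀ ω, 0 ≤ μ ω) (E : Ω → Prop)
    (ω : Ω) (hω : μ ω ≠ 0) (hE : E ω) : 0 < pr μ E := by
  unfold pr
  refine Finset.sum_pos' (fun i _ => ?_) ⟨ω, Finset.mem_univ _, ?_⟩
  · split_ifs
    · exact h0 i
    · exact le_rfl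
  · rw [if_pos hE]
    exact lt_of_le_of_ne (h0 ω) (Ne.symm hω)

theorem ci_pr_sum {Ω B : Type} [Fintype Ω] [Fintype B] (μ : Ω → ℝ) (β : Ω → B) (E : Ω → Prop) :
    pr μ E = ∑ b, pr μ (fun ω => E ω ∧ β ω = b) := by
  unfold pr
  rw [Finset.sum_comm]
  refine Finset.sum_congr rfl fun ω _ => ?_
  by_cases h : E ω
  · simp [h]
  · simp [h]

theorem ci_condMI {Ω A B C : Type} [Fintype Ω] [Fintype A] [Fintype B] (μ : Ω → ℝ)
    (h0 : ∀ ω, 0 ≤ μ ω) (α : Ω → A) (β : Ω → B) (γ : Ω → C) (u : C → A → ℝ) (v : C → B → ℝ)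
    (h : ∀ a b c, pr μ (fun ω => (γ ω = c ∧ α ω = a) ∧ β ω = b) = u c a * v c b) :
    condMutualInfo μ α β γ = 0 := by
  have h1 : ∀ a c, pr μ (fun ω => γ ω = c ∧ α ω = a) = u c a * ∑ b, v c b := by
    intro a c
    rw [ci_pr_sum μ β, Finset.mul_sum]
    exact Finset.sum_congr rfl fun b _ => h a b c
  have h2 : ∀ b c, pr μ (fun ω => γ ω = c ∧ β ω = b) = (∑ a, u c a) * v c b := by
    intro b c
    rw [ci_pr_sum μ α, Finset.sum_mul]
    refine Finset.sum_congr rfl fun a _ => ?_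
    rw [← h a b c]
    congr 1
    ext ω
    tauto
  have h3 : ∀ c, pr μ (fun ω => γ ω = c) = (∑ a, u c a) * ∑ b, v c b := by
    intro c
    rw [ci_pr_sum μ α, Finset.sum_mul]
    exact Finset.sum_congr rfl fun a _ => h1 a c
  unfold condMutualInfo condEnt
  simp only [ci_ent_eq, Prod.mk.injEq]
  have key : ∀ ω, μ ω * Real.logb 2 (pr μ (fun ω' => α ω' = α ω ∧ γ ω' = γ ω))
      + μ ω * Real.logb 2 (pr μ (fun ω' => β ω' = β ω ∧ γ ω' = γ ω))
      = μ ω * Real.logb 2 (pr μ (fun ω' => (α ω' = α ω ∧ β ω' = β ω) ∧ γ ω' = γ ω))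
      + μ ω * Real.logb 2 (pr μ (fun ω' => γ ω' = γ ω)) := by
    intro ω
    by_cases hω : μ ω = 0
    · simp [hω]
    have p1 := ci_pr_pos μ h0 (fun ω' => α ω' = α ω ∧ γ ω' = γ ω) ω hω ⟨rfl, rfl⟩
    have p2 := ci_pr_pos μ h0 (fun ω' => β ω' = β ω ∧ γ ω' = γ ω) ω hω ⟨rfl, rfl⟩
    have p3 := ci_pr_pos μ h0 (fun ω' => (α ω' = α ω ∧ β ω' = β ω) ∧ γ ω' = γ ω) ω hω
      ⟨⟨rfl, rfl⟩, rfl⟩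
    have p4 := ci_pr_pos μ h0 (fun ω' => γ ω' = γ ω) ω hω rfl
    rw [← mul_add, ← mul_add, ← Real.logb_mul p1.ne' p2.ne', ← Real.logb_mul p3.ne' p4.ne']
    congr 2
    have e1 : (fun ω' => α ω' = α ω ∧ γ ω' = γ ω) = (fun ω' => γ ω' = γ ω ∧ α ω' = α ω) := by
      ext; tauto
    have e2 : (fun ω' => β ω' = β ω ∧ γ ω' = γ ω) = (fun ω' => γ ω' = γ ω ∧ β ω' = β ω) := by
      ext; tauto
    have e3 : (fun ω' => (α ω' = α ω ∧ β ω' = β ω) ∧ γ ω' = γ ω)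
        = (fun ω' => (γ ω' = γ ω ∧ α ω' = α ω) ∧ β ω' = β ω) := by
      ext; tauto
    rw [e1, e2, e3, h1, h2, h3, h]
    ring
  have hs := Finset.sum_congr (rfl : (Finset.univ : Finset Ω) = Finset.univ) (fun ω _ => key ω)
  simp only [Finset.sum_add_distrib] at hs
  linarith

/-! ### Combinatorial form of the chain -/

/-- One step of the chain, on the level of joint probability tables. -/
def CiStep {A B A' B' : Type} [Fintype A] [Fintype B] [Fintype A'] [Fintype B']
    (M : A → B → ℝ) (N : A' → B' → ℝ) : Prop :=
  ∃ P : A → B → A' → B' → ℝ, (∀ a b a' b', 0 ≤ P a b a' b') ∧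
    (∀ a b, ∑ a', ∑ b', P a b a' b' = M a b) ∧
    (∀ a' b', ∑ a, ∑ b, P a b a' b' = N a' b') ∧
    (∃ (u : A' → A → ℝ) (v : A' → B → ℝ), ∀ a b a', ∑ b', P a b a' b' = u a' a * v a' b) ∧
    (∃ (u : B' → A → ℝ) (v : B' → B → ℝ), ∀ a b b', ∑ a', P a b a' b' = u b' a * v b' b)

inductive CiGood : ∀ (A B : Type) [Fintype A] [Fintype B], (A → B → ℝ) → Prop
  | base {A B : Type} [Fintype A] [Fintype B] (x : A → ℝ) (y : B → ℝ)
      (hx : ∀ a, 0 ≤ x a) (hy : ∀ b, 0 ≤ y b) (sx : ∑ a, x a = 1) (sy : ∑ b, y b = 1) :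
      CiGood A B (fun a b => x a * y b)
  | step {A B A' B' : Type} [Fintype A] [Fintype B] [Fintype A'] [Fintype B']
      (M : A → B → ℝ) (N : A' → B' → ℝ) (h : CiStep M N) (hN : CiGood A' B' N) :
      CiGood A B M

theorem CiGood.prob {A B : Type} [Fintype A] [Fintype B] {M : A → B → ℝ} (h : CiGood A B M) :
    (∀ a b, 0 ≤ M a b) ∧ ∑ a, ∑ b, M a b = 1 := by
  induction h with
  | base x y hx hy sx sy =>
    refine ⟨fun a b => mul_nonneg (hx a) (hy b), ?_⟩
    rw [← Finset.sum_mul_sum, sx, sy, one_mul]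
  | step M N h hN ih =>
    obtain ⟨P, hP, h1, h2, -, -⟩ := h
    refine ⟨fun a b => ?_, ?_⟩
    · rw [← h1]
      exact Finset.sum_nonneg fun _ _ => Finset.sum_nonneg fun _ _ => hP _ _ _ _
    · rw [← ih.2]
      simp only [← h1, ← h2]
      calc _ = ∑ p : _ × _, ∑ q : _ × _, P p.1 p.2 q.1 q.2 := by
            simp only [Fintype.sum_prod_type]
        _ = ∑ q : _ × _, ∑ p : _ × _, P p.1 p.2 q.1 q.2 := Finset.sum_comm
        _ = _ := by simp only [Fintype.sum_prod_type]

theorem CiGood.order {A B : Type} [Fintype A] [Fintype B] {M : A → B → ℝ} (h : CiGood A B M) :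
    ∃ k, ∀ (Ω : Type) (iΩ : Fintype Ω) (μ : Ω → ℝ) (α : Ω → A) (β : Ω → B),
      (∀ a b, pr μ (fun ω => α ω = a ∧ β ω = b) = M a b) → CondIndepOrderAux k Ω A B iΩ μ α β := by
  induction h with
  | base x y hx hy sx sy =>
    refine ⟨0, fun Ω iΩ μ α β h => ?_⟩
    intro a b
    rw [ci_pr_sum μ β (fun ω => α ω = a), ci_pr_sum μ α (fun ω => β ω = b), h]
    have e : ∀ i, pr μ (fun ω => β ω = b ∧ α ω = i) = x i * y b := by
      intro i
      refine Eq.trans ?_ (h i b)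
      congr 1
      ext; tauto
    simp only [e, h]
    rw [← Finset.mul_sum, ← Finset.sum_mul, sx, sy]
    ring
  | @step A B A' B' iA iB iA' iB' M N h hN ih =>
    have hp := (CiGood.step M N h hN).prob
    obtain ⟨k, ih⟩ := ih
    obtain ⟨P, hP, h1, h2, ⟨u, v, huv⟩, ⟨u', v', huv'⟩⟩ := h
    refine ⟨k + 1, fun Ω iΩ μ α β h => ?_⟩
    refine ⟨A × B × A' × B', A', B', inferInstance, fun ω => P ω.1 ω.2.1 ω.2.2.1 ω.2.2.2,
      fun ω => ω.1, fun ω => ω.2.1, fun ω => ω.2.2.1, fun ω => ω.2.2.2, ⟨?_, ?_⟩, ?_, ?_, ?_, ?_⟩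
    · exact fun ω => hP _ _ _ _
    · rw [← hp.2]
      simp only [Fintype.sum_prod_type, h1]
    · intro a b
      rw [h, ← h1]
      simp only [pr, Fintype.sum_prod_type, ite_and]
      simp [Finset.sum_ite_irrel]
    · refine ci_condMI _ (fun ω => hP _ _ _ _) _ _ _ u v ?_
      intro a b c
      rw [← huv]
      simp only [pr, Fintype.sum_prod_type, ite_and]
      simp [Finset.sum_ite_irrel]
    · refine ci_condMI _ (fun ω => hP _ _ _ _) _ _ _ u' v' ?_
      intro a b c
      rw [← huv']
      simp only [pr, Fintype.sum_prod_type, ite_and]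
      simp [Finset.sum_ite_irrel]
    · apply ih
      intro a b
      rw [← h2]
      simp only [pr, Fintype.sum_prod_type, ite_and]
      simp [Finset.sum_ite_irrel]

/-- Markov chain step. -/
theorem CiGood.markov {A B A' B' : Type} [Fintype A] [Fintype B] [Fintype A'] [Fintype B']
    {N : A' → B' → ℝ} (hN : CiGood A' B' N) (S : A' → A → ℝ) (T : B' → B → ℝ)
    (hS : ∀ i j, 0 ≤ S i j) (hT : ∀ i j, 0 ≤ T i j) (sS : ∀ i, ∑ j, S i j = 1)
    (sT : ∀ i, ∑ j, T i j = 1) (M : A → B → ℝ)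
    (hM : ∀ a b, M a b = ∑ a', ∑ b', S a' a * N a' b' * T b' b) : CiGood A B M := by
  refine CiGood.step M N ⟨fun a b a' b' => S a' a * N a' b' * T b' b, ?_, ?_, ?_, ?_, ?_⟩ hN
  · exact fun a b a' b' => mul_nonneg (mul_nonneg (hS _ _) (hN.prob.1 _ _)) (hT _ _)
  · exact fun a b => (hM a b).symm
  · intro a' b'
    simp only [← Finset.mul_sum, sT, mul_one, ← Finset.sum_mul, sS, one_mul]
  · refine ⟨S, fun a' b => ∑ b', N a' b' * T b' b, fun a b a' => ?_⟩
    simp only [mul_assoc, ← Finset.mul_sum]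
  · refine ⟨fun b' a => ∑ a', S a' a * N a' b', T, fun a b b' => ?_⟩
    simp only [← Finset.sum_mul]

/-- Tensor a step with a fixed table. -/
theorem CiStep.tensor {A B A' B' C D : Type} [Fintype A] [Fintype B] [Fintype A'] [Fintype B']
    [Fintype C] [Fintype D] {M : A → B → ℝ} {N : A' → B' → ℝ} (h : CiStep M N)
    (Q : C → D → ℝ) (hQ : ∀ c d, 0 ≤ Q c d) :
    CiStep (fun (p : A × C) (q : B × D) => M p.1 q.1 * Q p.2 q.2)
      (fun (p : A' × C) (q : B' × D) => N p.1 q.1 * Q p.2 q.2) := by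
  obtain ⟨P, hP, h1, h2, ⟨u, v, huv⟩, ⟨u', v', huv'⟩⟩ := h
  refine ⟨fun p q p' q' => if p.2 = p'.2 then if q.2 = q'.2 then
    P p.1 q.1 p'.1 q'.1 * Q p'.2 q'.2 else 0 else 0, ?_, ?_, ?_, ?_, ?_⟩
  · intro p q p' q'
    dsimp only
    split_ifs
    · exact mul_nonneg (hP _ _ _ _) (hQ _ _)
    · exact le_rfl
    · exact le_rfl
  · rintro ⟨a, c⟩ ⟨b, d⟩
    simp only [Fintype.sum_prod_type]
    simp [Finset.sum_ite_irrel, ← Finset.sum_mul, h1]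
  · rintro ⟨a, c⟩ ⟨b, d⟩
    simp only [Fintype.sum_prod_type]
    simp [Finset.sum_ite_irrel, ← Finset.sum_mul, h2]
  · refine ⟨fun p' p => if p.2 = p'.2 then u p'.1 p.1 else 0,
      fun p' q => v p'.1 q.1 * Q p'.2 q.2, ?_⟩
    rintro ⟨a, c⟩ ⟨b, d⟩ ⟨a', c'⟩
    simp only [Fintype.sum_prod_type]
    simp [Finset.sum_ite_irrel, ← Finset.sum_mul, huv, mul_assoc]
  · refine ⟨fun q' p => u' q'.1 p.1 * Q p.2 q'.2,
      fun q' q => if q.2 = q'.2 then v' q'.1 q.1 else 0, ?_⟩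
    rintro ⟨a, c⟩ ⟨b, d⟩ ⟨b', d'⟩
    simp only [Fintype.sum_prod_type]
    simp [Finset.sum_ite_irrel, ← Finset.sum_mul, huv', mul_right_comm]

theorem CiGood.tensor_base {A B C D : Type} [Fintype A] [Fintype B] [Fintype C] [Fintype D]
    {Q : C → D → ℝ} (hQ : CiGood C D Q) :
    ∀ (x : A → ℝ) (y : B → ℝ)
      (_ : ∀ a, 0 ≤ x a) (_ : ∀ b, 0 ≤ y b) (_ : ∑ a, x a = 1) (_ : ∑ b, y b = 1),
      CiGood (C × A) (D × B) (fun p q => Q p.1 q.1 * (x p.2 * y q.2)) := by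
  induction hQ with
  | base x' y' hx' hy' sx' sy' =>
    intro x y hx hy sx sy
    have := CiGood.base (fun p : _ × A => x' p.1 * x p.2) (fun p : _ × B => y' p.1 * y p.2)
      (fun p => mul_nonneg (hx' _) (hx _)) (fun p => mul_nonneg (hy' _) (hy _))
      (by rw [Fintype.sum_prod_type]; simp only [← Finset.mul_sum, sx, mul_one, sx'])
      (by rw [Fintype.sum_prod_type]; simp only [← Finset.mul_sum, sy, mul_one, sy'])
    convert this using 3
    ring
  | step M N h hN ih =>
    intro x y hx hy sx sy
    exact CiGood.step _ _ (h.tensor (fun a b => x a * y b)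
      (fun a b => mul_nonneg (hx _) (hy _))) (ih x y hx hy sx sy)

theorem CiGood.tensor {A B C D : Type} [Fintype A] [Fintype B] [Fintype C] [Fintype D]
    {M : A → B → ℝ} (hM : CiGood A B M) {Q : C → D → ℝ} (hQ : CiGood C D Q) :
    CiGood (A × C) (B × D) (fun p q => M p.1 q.1 * Q p.2 q.2) := by
  induction hM with
  | base x y hx hy sx sy =>
    refine (hQ.tensor_base x y hx hy sx sy).markov
      (fun p q => if q = p.swap then 1 else 0) (fun p q => if q = p.swap then 1 else 0)
      (fun _ _ => by split_ifs <;> norm_num) (fun _ _ => by split_ifs <;> norm_num)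
      (fun _ => by simp) (fun _ => by simp) _ ?_
    rintro ⟨a, c⟩ ⟨b, d⟩
    simp only [Fintype.sum_prod_type, Prod.swap_prod_mk, Prod.mk.injEq, ite_and]
    simp [Finset.sum_ite_irrel]
    ring
  | step M N h hN ih =>
    exact CiGood.step _ _ (h.tensor Q hQ.prob.1) ih

/-! ### Binary tables -/

theorem ci_corner_step (r1 r2 a b c d : ℝ) (h1 : 0 ≤ r1) (h2 : 0 ≤ r2) (ha : 0 ≤ a) (hb : 0 ≤ b)
    (hc : 0 ≤ c) (hd : 0 ≤ d) (hs : a + b + c + d = 1 - r1 - r2) :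
    CiStep (![![1 - r1 - r2, r2], ![r1, 0]] : Fin 2 → Fin 2 → ℝ)
      (![![r2 + a, b], ![c, r1 + d]] : Fin 2 → Fin 2 → ℝ) := by
  refine ⟨![![![![a, b], ![c, d]], ![![r2, 0], ![0, 0]]],
      ![![![0, 0], ![0, r1]], ![![0, 0], ![0, 0]]]],
    ?_, ?_, ?_, ⟨![![1, 0], ![c + d, r1]], ![![a + b, r2], ![1, 0]], ?_⟩,
    ⟨![![1, 0], ![b + d, r1]], ![![a + c, r2], ![1, 0]], ?_⟩⟩
  all_goals simp [Fin.forall_fin_two, Fin.sum_univ_two]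
  · tauto
  all_goals (try refine ⟨?_, ?_⟩) <;> (try constructor) <;> (try constructor) <;> linarith

theorem ci_diag_step (a c d : ℝ) (ha : 0 < a) (hd : 0 < d) (hc : 0 ≤ c)
    (hdet : c ^ 2 ≤ a * d) (hs : a + 2 * c + d = 1) :
    CiStep (![![a, c], ![c, d]] : Fin 2 → Fin 2 → ℝ)
      (![![1 - (d - c ^ 2 / a) - (a - c ^ 2 / d), a - c ^ 2 / d],
        ![d - c ^ 2 / a, 0]] : Fin 2 → Fin 2 → ℝ) := by
  have e1 : c ^ 2 / a ≤ d := by rw [div_le_iff₀ ha]; linarith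
  have e2 : c ^ 2 / d ≤ a := by rw [div_le_iff₀ hd]; linarith
  have f1 : 0 ≤ c ^ 2 / a := by positivity
  have f2 : 0 ≤ c ^ 2 / d := by positivity
  have g1 : c / a * c = c ^ 2 / a := by ring
  have g2 : c / d * c = c ^ 2 / d := by ring
  have g3 : c / a * a = c := by field_simp
  have g4 : c / d * d = c := by field_simp
  refine ⟨![![![![c ^ 2 / d, a - c ^ 2 / d], ![0, 0]], ![![c, 0], ![0, 0]]],
      ![![![c, 0], ![0, 0]], ![![c ^ 2 / a, 0], ![d - c ^ 2 / a, 0]]]],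
    ?_, ?_, ?_, ⟨![![1, c / a], ![0, 1]], ![![a, c], ![0, d - c ^ 2 / a]], ?_⟩,
    ⟨![![c / d, 1], ![1, 0]], ![![c, d], ![a - c ^ 2 / d, 0]], ?_⟩⟩
  all_goals simp [Fin.forall_fin_two, Fin.sum_univ_two, g1, g2, g3, g4]
  all_goals (try refine ⟨?_, ?_⟩) <;> (try constructor) <;> (try constructor) <;> linarith

theorem ci_corner_base (r1 r2 : ℝ) (h1 : 0 ≤ r1) (h2 : 0 ≤ r2) (h : √r1 + √r2 ≤ 1) :
    CiGood (Fin 2) (Fin 2) (![![1 - r1 - r2, r2], ![r1, 0]]) := by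
  have s1 := Real.sqrt_nonneg r1
  have s2 := Real.sqrt_nonneg r2
  have q1 := Real.sq_sqrt h1
  have q2 := Real.sq_sqrt h2
  set s := √r1
  set x := √r2
  refine CiGood.step _ _ (ci_corner_step r1 r2 0 (x * (1 - x)) (x * (1 - x)) ((1 - x) ^ 2 - r1)
    h1 h2 le_rfl (mul_nonneg s2 (by linarith)) (mul_nonneg s2 (by linarith)) (by nlinarith)
    (by rw [← q2]; ring)) ?_
  have := CiGood.base (![x, 1 - x]) (![x, 1 - x]) (by simp [Fin.forall_fin_two]; constructor <;> linarith)
    (by simp [Fin.forall_fin_two]; constructor <;> linarith) (by simp) (by simp)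
  convert this using 1
  ext i j
  fin_cases i <;> fin_cases j <;> simp <;> nlinarith

theorem ci_corner (c0 : ℝ) (hc0 : 0 < c0) (k : ℕ) : ∀ (r1 r2 : ℝ), 0 ≤ r1 → 0 ≤ r2 →
    2 * c0 ≤ 1 - r1 - r2 → r1 + r2 ≤ k * c0 ^ 2 →
    CiGood (Fin 2) (Fin 2) (![![1 - r1 - r2, r2], ![r1, 0]]) := by
  induction k with
  | zero =>
    intro r1 r2 h1 h2 _ h
    have e1 : r1 = 0 := by simp at h; linarith
    have e2 : r2 = 0 := by simp at h; linarith
    exact ci_corner_base r1 r2 h1 h2 (by simp [e1, e2])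
  | succ k ih =>
    intro r1 r2 h1 h2 hc h
    by_cases hb : √r1 + √r2 ≤ 1
    · exact ci_corner_base r1 r2 h1 h2 hb
    push Not at hb
    obtain ⟨c, hcdef⟩ : ∃ c, c = (1 - r1 - r2) / 2 := ⟨_, rfl⟩
    have s1 := Real.sqrt_nonneg r1
    have s2 := Real.sqrt_nonneg r2
    have q1 := Real.sq_sqrt h1
    have q2 := Real.sq_sqrt h2
    have hst : c < √r1 * √r2 := by nlinarith
    have hcc : c0 ≤ c := by linarith
    have hdet : c ^ 2 < r1 * r2 := by
      rw [← q1, ← q2, ← mul_pow]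
      exact pow_lt_pow_left₀ hst (by linarith) two_ne_zero
    have hprod : 0 < r1 * r2 := lt_of_le_of_lt (sq_nonneg c) hdet
    have p1 : 0 < r1 := lt_of_le_of_ne h1 (fun e => by rw [← e] at hprod; simp at hprod)
    have p2 : 0 < r2 := lt_of_le_of_ne h2 (fun e => by rw [← e] at hprod; simp at hprod)
    have hsq : c0 ^ 2 ≤ c ^ 2 := pow_le_pow_left₀ hc0.le hcc 2
    have l1 : c ^ 2 ≤ c ^ 2 / r1 := by
      rw [le_div_iff₀ p1]; nlinarith [sq_nonneg c]
    have l2 : 0 ≤ c ^ 2 / r2 := by positivity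
    have e1 : c ^ 2 / r1 ≤ r2 := by rw [div_le_iff₀ p1]; linarith
    have e2 : c ^ 2 / r2 ≤ r1 := by rw [div_le_iff₀ p2]; linarith
    have st1 := ci_corner_step r1 r2 0 c c 0 h1 h2 le_rfl (by linarith) (by linarith) le_rfl
      (by linarith)
    rw [add_zero, add_zero] at st1
    have st2 := ci_diag_step r2 c r1 p2 p1 (by linarith) (by linarith) (by linarith)
    refine CiGood.step _ _ st1 (CiGood.step _ _ st2 (ih _ _ ?_ ?_ ?_ ?_))
    · linarith
    · linarith
    · nlinarith
    · push_cast at h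
      linarith

theorem ci_diag (a c d : ℝ) (ha : 0 < a) (hd : 0 < d) (hc : 0 < c)
    (hdet : c ^ 2 ≤ a * d) (hs : a + 2 * c + d = 1) :
    CiGood (Fin 2) (Fin 2) (![![a, c], ![c, d]]) := by
  obtain ⟨k, hk⟩ := exists_nat_ge (1 / c ^ 2)
  have hk' : 1 ≤ k * c ^ 2 := by
    rwa [div_le_iff₀ (by positivity)] at hk
  have e1 : c ^ 2 / a ≤ d := by rw [div_le_iff₀ ha]; linarith
  have e2 : c ^ 2 / d ≤ a := by rw [div_le_iff₀ hd]; linarith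
  have f1 : 0 ≤ c ^ 2 / a := by positivity
  have f2 : 0 ≤ c ^ 2 / d := by positivity
  refine CiGood.step _ _ (ci_diag_step a c d ha hd hc.le hdet hs) (ci_corner c hc k _ _ ?_ ?_ ?_ ?_)
  all_goals linarith

/-! ### Positive tables -/

theorem ci_exists_eps {m n : ℕ} (M : Fin m → Fin n → ℝ) (hpos : ∀ i j, 0 < M i j) :
    ∃ ε : ℝ, 0 < ε ∧ ε < 1 ∧ ∀ i j, ε < M i j := by
  obtain ⟨x, hx⟩ := Finite.exists_min (fun o : Option (Fin m × Fin n) =>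
    o.elim 1 (fun p => M p.1 p.2))
  have hx0 : 0 < Option.elim x 1 (fun p : Fin m × Fin n => M p.1 p.2) := by
    cases x with
    | none => simp
    | some p => exact hpos _ _
  refine ⟨Option.elim x 1 (fun p : Fin m × Fin n => M p.1 p.2) / 2, by linarith, ?_, ?_⟩
  · have := hx none
    simp only [Option.elim] at this hx0 ⊢
    linarith
  · intro i j
    have := hx (some (i, j))
    simp only [Option.elim] at this hx0 ⊢
    linarith

theorem ci_pos (n m : ℕ) : ∀ (M : Fin (m + 1) → Fin n → ℝ), (∀ i j, 0 < M i j) →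
    ∑ i, ∑ j, M i j = 1 → CiGood (Fin (m + 1)) (Fin n) M := by
  induction m with
  | zero =>
    intro M hpos hs
    have := CiGood.base (fun _ : Fin 1 => (1 : ℝ)) (M 0) (fun _ => zero_le_one)
      (fun j => (hpos 0 j).le) (by simp) (by simpa using hs)
    convert this using 1
    ext i j
    obtain rfl : i = 0 := Fin.fin_one_eq_zero i
    simp
  | succ m ih =>
    intro M hpos hs
    obtain ⟨ε, he0, he1, heM⟩ := ci_exists_eps M hpos
    have hn : Nonempty (Fin n) := by
      by_contra hne
      rw [not_nonempty_iff] at hne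
      simp at hs
    -- row and column sums
    obtain ⟨t, ht⟩ : ∃ t, t = ∑ j, M 0 j := ⟨_, rfl⟩
    obtain ⟨p, hp⟩ : ∃ p : Fin (m + 1) → ℝ, ∀ i, p i = ∑ j, M i.succ j := ⟨_, fun _ => rfl⟩
    obtain ⟨q, hq⟩ : ∃ q : Fin n → ℝ, ∀ j, q j = ∑ i, M i j := ⟨_, fun _ => rfl⟩
    have ht0 : 0 < t := ht ▸ Finset.sum_pos (fun j _ => hpos 0 j) Finset.univ_nonempty
    have hp0 : ∀ i, 0 < p i := fun i => hp i ▸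
      Finset.sum_pos (fun j _ => hpos _ j) Finset.univ_nonempty
    have hq0 : ∀ i, 0 < q i := fun i => hq i ▸
      Finset.sum_pos (fun j _ => hpos j _) Finset.univ_nonempty
    have hsp : ∑ i, p i = 1 - t := by
      rw [Fin.sum_univ_succ, ← ht] at hs
      simp only [hp]
      linarith
    have hsq : ∑ j, q j = 1 := by
      simp only [hq]
      rw [Finset.sum_comm]
      exact hs
    have ht1 : 0 < 1 - t := hsp ▸ Finset.sum_pos (fun i _ => hp0 i) Finset.univ_nonempty
    have hp1 : ∀ i, p i ≤ 1 - t := fun i => hsp ▸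
      Finset.single_le_sum (fun i _ => (hp0 i).le) (Finset.mem_univ i)
    have hq1 : ∀ j, q j ≤ 1 := fun i => hsq ▸
      Finset.single_le_sum (fun i _ => (hq0 i).le) (Finset.mem_univ i)
    have hqs : ∀ j, ∑ i : Fin (m + 1), M i.succ j = q j - M 0 j := by
      intro j
      rw [hq, Fin.sum_univ_succ (fun i => M i j)]
      ring
    have he1' : 0 < 1 - ε := by linarith
    have het : 0 < 1 - ε * t := by nlinarith
    -- the law of the second variable in the second state
    obtain ⟨Q, hQ⟩ : ∃ Q : Fin n → ℝ, ∀ j, Q j = (M 0 j - ε * t * q j) / (t * (1 - ε)) :=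
      ⟨_, fun _ => rfl⟩
    have hQe : ∀ j, t * (1 - ε) * Q j = M 0 j - ε * t * q j := fun j => by
      rw [hQ]; field_simp
    have hQ0 : ∀ j, 0 ≤ Q j := by
      intro j
      rw [hQ]
      refine div_nonneg ?_ (by positivity)
      have h1 := heM 0 j
      have h2 : t * q j ≤ 1 := by nlinarith [hq0 j, hq1 j]
      nlinarith
    have hQs : ∑ j, Q j = 1 := by
      simp only [hQ]
      rw [← Finset.sum_div, Finset.sum_sub_distrib, ← Finset.mul_sum, ← ht, hsq,
        div_eq_one_iff_eq (by positivity)]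
      ring
    have hQ1 : ∀ j, Q j ≤ 1 := fun i => hQs ▸
      Finset.single_le_sum (fun i _ => hQ0 i) (Finset.mem_univ i)
    -- the table of the first state
    obtain ⟨L, hL⟩ : ∃ L : Fin (m + 1) → Fin n → ℝ, ∀ i j,
        L i j = (M i.succ j - ε * t * p i * Q j) / ((1 - t) * (1 - ε * t)) :=
      ⟨_, fun _ _ => rfl⟩
    have hLe : ∀ i j, (1 - t) * (1 - ε * t) * L i j = M i.succ j - ε * t * p i * Q j :=
      fun i j => by rw [hL, mul_div_cancel₀ _ (mul_pos ht1 het).ne']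
    have hL0 : ∀ i j, 0 < L i j := by
      intro i j
      rw [hL]
      refine div_pos ?_ (by positivity)
      have h1 := heM i.succ j
      have h2 : t * p i ≤ 1 := by nlinarith [hp0 i, hp1 i]
      have h3 : t * p i * Q j ≤ 1 :=
        mul_le_one₀ h2 (hQ0 j) (hQ1 j)
      nlinarith
    have hLr : ∀ i, ∑ j, L i j = p i / (1 - t) := by
      intro i
      simp only [hL]
      rw [← Finset.sum_div, Finset.sum_sub_distrib, ← Finset.mul_sum, ← hp, hQs]
      field_simp
    have hLc : ∀ j, (1 - t) * ∑ i, L i j = q j - t * Q j := by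
      intro j
      have h1 : (1 - t) * (1 - ε * t) * ∑ i, L i j = q j - M 0 j - ε * t * (1 - t) * Q j := by
        rw [Finset.mul_sum]
        simp only [hLe]
        rw [Finset.sum_sub_distrib, hqs, ← Finset.sum_mul, ← Finset.mul_sum, hsp]
      have h2 := hQe j
      apply mul_left_cancel₀ het.ne'
      linear_combination h1 + h2
    have hLs : ∑ i, ∑ j, L i j = 1 := by
      simp only [hLr]
      rw [← Finset.sum_div, hsp, div_self ht1.ne']
    have hLg := ih L hL0 hLs
    have hK := ci_diag ((1 - t) * (1 - ε * t)) (ε * t * (1 - t)) (t * (1 - ε * (1 - t)))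
      (by positivity) (mul_pos ht0 (by nlinarith)) (by positivity)
      (by
        have : 0 ≤ t * (1 - t) * (1 - ε) := by positivity
        linarith [this, show (1 - t) * (1 - ε * t) * (t * (1 - ε * (1 - t)))
          - (ε * t * (1 - t)) ^ 2 = t * (1 - t) * (1 - ε) by ring])
      (by ring)
    refine (hK.tensor hLg).markov
      (fun s i => if s.1 = 0 then (if i = s.2.succ then 1 else 0) else (if i = 0 then 1 else 0))
      (fun s j => if s.1 = 0 then (if j = s.2 then 1 else 0) else Q j) ?_ ?_ ?_ ?_ M ?_
    · intro s i
      split_ifs <;> norm_num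
    · intro s i
      split_ifs
      · norm_num
      · norm_num
      · exact hQ0 _
    · rintro ⟨s, x⟩
      by_cases h : s = 0 <;> simp [h]
    · rintro ⟨s, x⟩
      by_cases h : s = 0 <;> simp [h, hQs]
    · intro i j
      simp only [Fintype.sum_prod_type, Fin.sum_univ_two]
      refine Fin.cases ?_ (fun i => ?_) i
      · have z : ∀ x : Fin (m + 1), ¬ ((0 : Fin (m + 2)) = x.succ) :=
          fun x => (Fin.succ_ne_zero x).symm
        simp [z, Finset.sum_add_distrib]
        simp only [← Finset.mul_sum, ← Finset.sum_mul, hLs]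
        linear_combination -(ε * t) * hLc j - hQe j
      · simp [Finset.sum_add_distrib]
        simp only [← Finset.mul_sum, ← Finset.sum_mul, hLr]
        have h1 : (1 - t) * (p i / (1 - t)) = p i := mul_div_cancel₀ _ ht1.ne'
        linear_combination -hLe i j - ε * t * Q j * h1

theorem isGoodMatrix_of_pos {m n : ℕ} (M : Matrix (Fin m) (Fin n) ℝ)
    (hjp : IsJointProbMatrix M) (hpos : ∀ i j, 0 < M i j) :
    IsGoodMatrix M := by
  obtain ⟨h0, hs⟩ := hjp
  have hg : CiGood (Fin m) (Fin n) M := by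
    cases m with
    | zero => simp at hs
    | succ m => exact ci_pos n m M hpos hs
  obtain ⟨k, hk⟩ := hg.order
  have hpr : ∀ i j, pr (fun ω : Fin m × Fin n => M ω.1 ω.2)
      (fun ω => ω.1 = i ∧ ω.2 = j) = M i j := by
    intro i j
    simp only [pr, Fintype.sum_prod_type, ite_and]
    simp [Finset.sum_ite_irrel]
  refine ⟨Fin m × Fin n, inferInstance, fun ω => M ω.1 ω.2, fun ω => ω.1, fun ω => ω.2, k,
    ⟨fun ω => h0 _ _, ?_⟩, fun i j => (hpr i j).symm, hk _ _ _ _ _ hpr⟩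
  rw [Fintype.sum_prod_type]
  exact hs
end

section
/- Let N_ij (1 ≤ i ≤ p, 1 ≤ j ≤ q) be a family of m×n matrices with nonnegative real entries such that: (a) for every i the sum Σ_j N_ij has rank 1 and for every j the sum Σ_i N_ij has rank 1; (b) the p×q matrix P with entries p_ij = S(N_ij) is a good joint probability matrix, where S(N_ij) denotes the sum of all entries of N_ij. Then the m×n matrix Σ_{i,j} N_ij is a good joint probability matrix. -/
open scoped BigOperators Classical

section Helpers

lemma pr_nonneg' {Ω : Type} [Fintype Ω] (μ : Ω → ℝ) (h : ∀ ω, 0 ≤ μ ω) (E : Ω → Prop) :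
    0 ≤ pr μ E := by
  unfold pr
  apply Finset.sum_nonneg
  intro ω _
  split_ifs
  · exact h ω
  · exact le_rfl

lemma pr_sum_right {Ω B : Type} [Fintype Ω] [Fintype B] (μ : Ω → ℝ) (E : Ω → Prop)
    (β : Ω → B) : ∑ b, pr μ (fun ω => E ω ∧ β ω = b) = pr μ E := by
  unfold pr
  rw [Finset.sum_comm]
  apply Finset.sum_congr rfl
  intro ω _
  by_cases h : E ω <;> simp [h]

lemma ent_eq_univ {Ω A : Type} [Fintype Ω] [Fintype A] (μ : Ω → ℝ) (α : Ω → A) :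
    ent μ α = -∑ a, pr μ (fun ω => α ω = a) * Real.logb 2 (pr μ (fun ω => α ω = a)) := by
  unfold ent
  congr 1
  apply Finset.sum_subset (Finset.subset_univ _)
  intro a _ ha
  have : pr μ (fun ω => α ω = a) = 0 := by
    unfold pr
    apply Finset.sum_eq_zero
    intro ω _
    rw [if_neg]
    rintro rfl
    exact ha (Finset.mem_image_of_mem _ (Finset.mem_univ _))
  simp [this]

lemma entropy_identity {A B : Type} [Fintype A] [Fintype B] (T : A → B → ℝ) (r : A → ℝ)
    (c : B → ℝ) (S : ℝ) (hT : ∀ a b, 0 ≤ T a b) (hr : ∀ a, ∑ b, T a b = r a)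
    (hc : ∀ b, ∑ a, T a b = c b) (hS : ∑ a, r a = S) (h : ∀ a b, T a b * S = r a * c b) :
    ∑ a, ∑ b, T a b * Real.logb 2 (T a b) =
      ∑ a, r a * Real.logb 2 (r a) + ∑ b, c b * Real.logb 2 (c b) - S * Real.logb 2 S := by
  have hr0 : ∀ a, 0 ≤ r a := fun a => hr a ▸ Finset.sum_nonneg fun b _ => hT a b
  have key : ∀ a b, T a b * Real.logb 2 (T a b) =
      T a b * Real.logb 2 (r a) + T a b * Real.logb 2 (c b) - T a b * Real.logb 2 S := by
    intro a b
    rcases (hT a b).eq_or_lt with h0 | h0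
    · simp [← h0]
    have h1 : T a b ≤ r a := hr a ▸ Finset.single_le_sum (fun b _ => hT a b) (Finset.mem_univ b)
    have h2 : T a b ≤ c b := hc b ▸ Finset.single_le_sum (fun a _ => hT a b) (Finset.mem_univ a)
    have h3 : r a ≤ S := hS ▸ Finset.single_le_sum (fun a _ => hr0 a) (Finset.mem_univ a)
    have e := congrArg (Real.logb 2) (h a b)
    rw [Real.logb_mul (by linarith) (by linarith), Real.logb_mul (by linarith) (by linarith)] at e
    rw [← mul_add, ← e]
    ring
  simp_rw [key, Finset.sum_sub_distrib, Finset.sum_add_distrib]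
  congr 1
  · congr 1
    · simp_rw [← Finset.sum_mul, hr]
    · rw [Finset.sum_comm]
      simp_rw [← Finset.sum_mul, hc]
  · simp_rw [← Finset.sum_mul, hr, hS]

lemma condMutualInfo_eq_zero {Ω A B C : Type} [Fintype Ω] [Fintype A] [Fintype B] [Fintype C]
    (μ : Ω → ℝ) (hμ : ∀ ω, 0 ≤ μ ω) (α : Ω → A) (β : Ω → B) (γ : Ω → C)
    (h : ∀ a b c, pr μ (fun ω => (γ ω = c ∧ α ω = a) ∧ β ω = b) * pr μ (fun ω => γ ω = c) =
      pr μ (fun ω => γ ω = c ∧ α ω = a) * pr μ (fun ω => γ ω = c ∧ β ω = b)) :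
    condMutualInfo μ α β γ = 0 := by
  have key : ∀ c, _ := fun c => entropy_identity
    (fun a b => pr μ (fun ω => (γ ω = c ∧ α ω = a) ∧ β ω = b))
    (fun a => pr μ (fun ω => γ ω = c ∧ α ω = a))
    (fun b => pr μ (fun ω => γ ω = c ∧ β ω = b))
    (pr μ (fun ω => γ ω = c)) (fun a b => pr_nonneg' μ hμ _)
    (fun a => pr_sum_right μ _ β)
    (fun b => by
      rw [← pr_sum_right μ (fun ω => γ ω = c ∧ β ω = b) α]
      apply Finset.sum_congr rfl
      intro a _
      congr 1
      ext ω
      tauto)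
    (pr_sum_right μ _ α) (fun a b => h a b c)
  have e1 : ∀ a b c, (fun ω => ((α ω, β ω), γ ω) = ((a, b), c)) =
      (fun ω => (γ ω = c ∧ α ω = a) ∧ β ω = b) := by
    intro a b c; ext ω; simp only [Prod.mk.injEq]; tauto
  have e2 : ∀ a c, (fun ω => (α ω, γ ω) = (a, c)) = (fun ω => γ ω = c ∧ α ω = a) := by
    intro a c; ext ω; simp only [Prod.mk.injEq]; tauto
  have e3 : ∀ a c, (fun ω => (β ω, γ ω) = (a, c)) = (fun ω => γ ω = c ∧ β ω = a) := by
    intro a c; ext ω; simp only [Prod.mk.injEq]; tauto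
  have key2 := Finset.sum_congr (rfl : (Finset.univ : Finset C) = _) (fun c _ => key c)
  simp only [Finset.sum_sub_distrib, Finset.sum_add_distrib] at key2
  unfold condMutualInfo condEnt
  simp only [ent_eq_univ, Fintype.sum_prod_type_right, e1, e2, e3]
  have comm : ∀ c, ∑ b, ∑ a, pr μ (fun ω => (γ ω = c ∧ α ω = a) ∧ β ω = b) *
      Real.logb 2 (pr μ (fun ω => (γ ω = c ∧ α ω = a) ∧ β ω = b)) =
      ∑ a, ∑ b, pr μ (fun ω => (γ ω = c ∧ α ω = a) ∧ β ω = b) *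
      Real.logb 2 (pr μ (fun ω => (γ ω = c ∧ α ω = a) ∧ β ω = b)) :=
    fun c => Finset.sum_comm
  simp only [comm]
  linarith

lemma rank_one_factor {m n : ℕ} (M : Matrix (Fin m) (Fin n) ℝ) (h : M.rank = 1) :
    ∃ (u : Fin m → ℝ) (v : Fin n → ℝ), ∀ a b, M a b = u a * v b := by
  unfold Matrix.rank at h
  obtain ⟨u, -, hu⟩ := finrank_eq_one_iff'.1 h
  have : ∀ b, ∃ c : ℝ, ∀ a, M a b = u.1 a * c := by
    intro b
    obtain ⟨c, hc⟩ := hu ⟨M.mulVecLin (Pi.single b 1), LinearMap.mem_range_self _ _⟩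
    refine ⟨c, fun a => ?_⟩
    have := congrFun (congrArg Subtype.val hc) a
    simp at this
    rw [← this, mul_comm]
  choose v hv using this
  exact ⟨u.1, v, fun a b => hv b a⟩

lemma rank_one_identity {m n : ℕ} (M : Matrix (Fin m) (Fin n) ℝ) (h : M.rank = 1) (a : Fin m)
    (b : Fin n) : M a b * (∑ a, ∑ b, M a b) = (∑ b, M a b) * (∑ a, M a b) := by
  obtain ⟨u, v, huv⟩ := rank_one_factor M h
  simp only [huv, ← Finset.mul_sum, ← Finset.sum_mul]
  ring

lemma condIndepOrder_congr {Ω Ω' A B : Type} [iΩ : Fintype Ω] [iΩ' : Fintype Ω'] [Fintype A]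
    [Fintype B] (μ : Ω → ℝ) (μ' : Ω' → ℝ) (α : Ω → A) (β : Ω → B) (α' : Ω' → A) (β' : Ω' → B)
    (h : ∀ a b, pr μ (fun ω => α ω = a ∧ β ω = b) = pr μ' (fun ω => α' ω = a ∧ β' ω = b))
    (k : ℕ) (hk : CondIndepOrder μ α β k) : CondIndepOrder μ' α' β' k := by
  cases k with
  | zero =>
    intro a b
    have := hk a b
    rw [← h, this]
    congr 1
    · rw [← pr_sum_right μ _ β, ← pr_sum_right μ' _ β']
      exact Finset.sum_congr rfl fun b _ => h a b
    · rw [← pr_sum_right μ _ α, ← pr_sum_right μ' _ α']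
      refine Finset.sum_congr rfl fun a _ => ?_
      simpa only [and_comm] using h a b
  | succ k =>
    obtain ⟨Ω₁, A', B', i1, μ₁, α₀, β₀, αs, βs, h1, h2, h3⟩ := hk
    exact ⟨Ω₁, A', B', i1, μ₁, α₀, β₀, αs, βs, h1, fun a b => (h2 a b).trans (h a b), h3⟩

end Helpers

theorem isGoodMatrix_sum_of_blocks {p q m n : ℕ}
    (N : Fin p → Fin q → Matrix (Fin m) (Fin n) ℝ)
    (hnn : ∀ i j a b, 0 ≤ N i j a b)
    (hrow : ∀ i, (∑ j, N i j).rank = 1)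
    (hcol : ∀ j, (∑ i, N i j).rank = 1)
    (hP : IsGoodMatrix (Matrix.of fun i j => ∑ a, ∑ b, N i j a b)) :
    IsGoodMatrix (∑ i, ∑ j, N i j) := by
  obtain ⟨Ω, iΩ, μ, α, β, k, hμ, hM, hk⟩ := hP
  let Ω' := (Fin p × Fin q) × (Fin m × Fin n)
  let μ' : Ω' → ℝ := fun ω => N ω.1.1 ω.1.2 ω.2.1 ω.2.2
  have hnn' : ∀ ω, 0 ≤ μ' ω := fun ω => hnn _ _ _ _
  have hjoint : ∀ i j, pr μ (fun ω => α ω = i ∧ β ω = j) =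
      pr μ' (fun ω => ω.1.1 = i ∧ ω.1.2 = j) := by
    intro i j
    rw [← hM i j]
    simp [pr, μ', Ω', Fintype.sum_prod_type, ite_and]
  have hprob : IsProb μ' := by
    refine ⟨hnn', ?_⟩
    have e1 : ∑ ω, μ ω = ∑ i, ∑ j, pr μ (fun ω => α ω = i ∧ β ω = j) := by
      simp only [pr_sum_right]
      have := pr_sum_right μ (fun _ => True) α
      simp only [true_and] at this
      rw [this]
      simp [pr]
    rw [← hμ.2, e1]
    simp only [← hM _ _]
    simp [μ', Ω', Fintype.sum_prod_type]
  refine ⟨Ω', inferInstance, μ', fun ω => ω.2.1, fun ω => ω.2.2, k + 1, hprob, ?_, ?_⟩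
  · intro a b
    simp [pr, μ', Ω', Fintype.sum_prod_type, ite_and, Matrix.sum_apply]
  refine ⟨Ω', Fin p, Fin q, inferInstance, μ', fun ω => ω.2.1, fun ω => ω.2.2,
    fun ω => ω.1.1, fun ω => ω.1.2, hprob, fun a b => rfl, ?_, ?_, ?_⟩
  · apply condMutualInfo_eq_zero μ' hnn'
    intro a b i
    have := rank_one_identity _ (hrow i) a b
    convert this using 2
    · simp [pr, μ', Ω', Fintype.sum_prod_type, ite_and, Matrix.sum_apply]
    · simp [pr, μ', Ω', Fintype.sum_prod_type, ite_and, Matrix.sum_apply]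
      rw [Finset.sum_comm]
      exact Finset.sum_congr rfl fun a _ => Finset.sum_comm
    · simp [pr, μ', Ω', Fintype.sum_prod_type, ite_and, Matrix.sum_apply]
      exact Finset.sum_comm
    · simp [pr, μ', Ω', Fintype.sum_prod_type, ite_and, Matrix.sum_apply]
      exact Finset.sum_comm
  · apply condMutualInfo_eq_zero μ' hnn'
    intro a b j
    have := rank_one_identity _ (hcol j) a b
    convert this using 2
    · simp [pr, μ', Ω', Fintype.sum_prod_type, ite_and, Matrix.sum_apply]
    · simp [pr, μ', Ω', Fintype.sum_prod_type, ite_and, Matrix.sum_apply]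
      rw [Finset.sum_comm]
      exact Finset.sum_congr rfl fun a _ => Finset.sum_comm
    · simp [pr, μ', Ω', Fintype.sum_prod_type, ite_and, Matrix.sum_apply]
      exact Finset.sum_comm
    · simp [pr, μ', Ω', Fintype.sum_prod_type, ite_and, Matrix.sum_apply]
      exact Finset.sum_comm
  · exact condIndepOrder_congr μ μ' α β _ _ hjoint k hk
end
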